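/- Let t₁, t₂ be triples with λ₁, λ₂, λ₁+λ₂ nonzero, and set t₃ = t₁+t₂+e₂ and t₄ = t₁+t₂−e₂+e₃. Identifying V_{t₁} with the domain V_{t₄+t₂*+e₂} of Y_{t₄,t₂*} and with the domain of Y'_{t₃,t₂*}, and V_{t₂} with the domain of Y_{t₁*,t₄} and of Y'_{t₁*,t₃}, the following hold as linear maps from V_{t₁}⊗V_{t₂}: L'_{t₁,t₂} = (I_{t₄}⊗∩_{t₂})∘(Y_{t₄,t₂*}⊗I_{t₂}) = (∩_{t₁*}⊗I_{t₄})∘(I_{t₁}⊗Y_{t₁*,t₄}), and L_{t₁,t₂} = (−1)^{σ₂}·(λ₁/(λ₁+λ₂))·(I_{t₃}⊗∩_{t₂})∘(Y'_{t₃,t₂*}⊗I_{t₂}) = (−1)^{σ₁}·(λ₂/(λ₁+λ₂))·(∩_{t₁*}⊗I_{t₃})∘(I_{t₁}⊗Y'_{t₁*,t₃}). -/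

import Mathlib

open TensorProduct

noncomputable section

/-- a triple t = (λ, μ, σ) ∈ ℚ × ℚ × ℤ/2 -/
structure Triple where
  lam : ℚ
  mu : ℚ
  sg : ZMod 2

instance : Add Triple := ⟨fun a b => ⟨a.lam + b.lam, a.mu + b.mu, a.sg + b.sg⟩⟩
instance : Neg Triple := ⟨fun a => ⟨-a.lam, -a.mu, -a.sg⟩⟩
instance : Sub Triple := ⟨fun a b => a + -b⟩

def e₂ : Triple := ⟨0, 1, 0⟩
def e₃ : Triple := ⟨0, 0, 1⟩
/-- t* = (−λ, −μ, σ+1) -/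
def Triple.star (t : Triple) : Triple := ⟨-t.lam, -t.mu, t.sg + 1⟩

/-- the underlying space of every V_t: basis v = (1,0) (degree σ), w = (0,1) (degree σ+1) -/
abbrev V : Type := ℚ × ℚ
abbrev VV : Type := V ⊗[ℚ] V
abbrev VVV : Type := V ⊗[ℚ] VV

def vv : V := (1, 0)
def ww : V := (0, 1)

/-- (−1)^σ -/
def sgn (s : ZMod 2) : ℚ := if s = 0 then 1 else -1

/-- H: v ↦ (μ+1)v, w ↦ (μ−1)w -/
def opH (t : Triple) : V →ₗ[ℚ] V :=
  LinearMap.prodMap ((t.mu + 1) • LinearMap.id) ((t.mu - 1) • LinearMap.id)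
/-- D: multiplication by λ -/
def opD (t : Triple) : V →ₗ[ℚ] V := t.lam • LinearMap.id
/-- E: v ↦ 0, w ↦ λv -/
def opE (t : Triple) : V →ₗ[ℚ] V := (LinearMap.inl ℚ ℚ ℚ) ∘ₗ (t.lam • LinearMap.snd ℚ ℚ ℚ)
/-- F: v ↦ w, w ↦ 0 -/
def opF (t : Triple) : V →ₗ[ℚ] V := (LinearMap.inr ℚ ℚ ℚ) ∘ₗ (LinearMap.fst ℚ ℚ ℚ)
/-- the parity operator x ↦ (−1)^{deg x} x on V_t -/
def opJ (t : Triple) : V →ₗ[ℚ] V :=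
  LinearMap.prodMap (sgn t.sg • LinearMap.id) ((- sgn t.sg) • LinearMap.id)

/-- the four generators H, D, E, F of gl(1|1) -/
inductive Gen | H | D | E | F

/-- H and D have degree 0; E and F have degree 1 -/
def Gen.isEven : Gen → Bool
  | .H => true | .D => true | .E => false | .F => false

def op : Gen → Triple → V →ₗ[ℚ] V
  | .H, t => opH t
  | .D, t => opD t
  | .E, t => opE t
  | .F, t => opF t

/-- the super-Leibniz action X·(x⊗y) = (X·x)⊗y + (−1)^{deg X·deg x}·x⊗(X·y)
on V_{t₁}⊗V_{t₂} (the sign being implemented by the parity operator) -/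
def op2 (g : Gen) (t₁ t₂ : Triple) : VV →ₗ[ℚ] VV :=
  TensorProduct.map (op g t₁) LinearMap.id +
  TensorProduct.map (if g.isEven then LinearMap.id else opJ t₁) (op g t₂)

/-- the linear map ℚ×ℚ → M sending (1,0) ↦ p and (0,1) ↦ q -/
def bmap {M : Type*} [AddCommGroup M] [Module ℚ M] (p q : M) : V →ₗ[ℚ] M :=
  LinearMap.coprod (LinearMap.toSpanSingleton ℚ M p) (LinearMap.toSpanSingleton ℚ M q)

/-- Y_{t₁,t₂} : V_{t₁+t₂+e₂} → V_{t₁}⊗V_{t₂} -/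
def Ymap (t₁ t₂ : Triple) : V →ₗ[ℚ] VV :=
  bmap (vv ⊗ₜ[ℚ] vv) (ww ⊗ₜ[ℚ] vv + sgn t₁.sg • (vv ⊗ₜ[ℚ] ww))

/-- Y'_{t₁,t₂} : V_{t₁+t₂−e₂+e₃} → V_{t₁}⊗V_{t₂} -/
def Y'map (t₁ t₂ : Triple) : V →ₗ[ℚ] VV :=
  bmap ((t₁.lam + t₂.lam)⁻¹ •
      (t₁.lam • (vv ⊗ₜ[ℚ] ww) - (sgn t₁.sg * t₂.lam) • (ww ⊗ₜ[ℚ] vv)))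
    (ww ⊗ₜ[ℚ] ww)

/-- L_{t₁,t₂} : V_{t₁}⊗V_{t₂} → V_{t₁+t₂+e₂} -/
def Lmap (t₁ t₂ : Triple) : VV →ₗ[ℚ] V :=
  TensorProduct.lift (LinearMap.mk₂ ℚ
    (fun x y => ((x.1 * y.1 : ℚ),
      (t₁.lam / (t₁.lam + t₂.lam)) * (x.2 * y.1)
        + (sgn t₁.sg * t₂.lam / (t₁.lam + t₂.lam)) * (x.1 * y.2)))
    (by intro x x' y; apply Prod.ext <;> simp <;> ring)
    (by intro a x y; apply Prod.ext <;> simp [smul_eq_mul] <;> ring)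
    (by intro x y y'; apply Prod.ext <;> simp <;> ring)
    (by intro a x y; apply Prod.ext <;> simp [smul_eq_mul] <;> ring))

/-- L'_{t₁,t₂} : V_{t₁}⊗V_{t₂} → V_{t₁+t₂−e₂+e₃} -/
def L'map (t₁ t₂ : Triple) : VV →ₗ[ℚ] V :=
  TensorProduct.lift (LinearMap.mk₂ ℚ
    (fun x y => ((x.1 * y.2 - sgn t₁.sg * (x.2 * y.1) : ℚ), (x.2 * y.2 : ℚ)))
    (by intro x x' y; apply Prod.ext <;> simp <;> ring)
    (by intro a x y; apply Prod.ext <;> simp [smul_eq_mul] <;> ring)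
    (by intro x y y'; apply Prod.ext <;> simp <;> ring)
    (by intro a x y; apply Prod.ext <;> simp [smul_eq_mul] <;> ring))

/-- ∩_t : V_{t*}⊗V_t → ℚ -/
def capMap (t : Triple) : VV →ₗ[ℚ] ℚ :=
  TensorProduct.lift (LinearMap.mk₂ ℚ
    (fun x y => (x.1 * y.2 + sgn t.sg * (x.2 * y.1) : ℚ))
    (by intro x x' y; simp; ring)
    (by intro a x y; simp [smul_eq_mul]; ring)
    (by intro x y y'; simp; ring)
    (by intro a x y; simp [smul_eq_mul]; ring))

/-- ∪_t : ℚ → V_{t*}⊗V_t -/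
def cupMap (t : Triple) : ℚ →ₗ[ℚ] VV :=
  LinearMap.toSpanSingleton ℚ VV (ww ⊗ₜ[ℚ] vv - sgn t.sg • (vv ⊗ₜ[ℚ] ww))

/-!
All four identities are checked on the basis tensors `v ⊗ v`, `v ⊗ w`, `w ⊗ v`, `w ⊗ w`. Beyond
multiplicativity of `σ ↦ (-1)^σ`, the computation rests on two cancellations: the denominator of
`Y'_{t₃,t₂*}` is `(λ₁ + λ₂) - λ₂ = λ₁` and that of `Y'_{t₁*,t₃}` is `-λ₁ + (λ₁ + λ₂) = λ₂`.
These are what the prefactors `λ₁/(λ₁+λ₂)` and `λ₂/(λ₁+λ₂)` compensate.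
-/

section Contraction

variable {R M N P : Type*} [CommSemiring R] [AddCommMonoid M] [AddCommMonoid N] [AddCommMonoid P]
  [Module R M] [Module R N] [Module R P]

/-- Contraction of the last two tensor factors with a pairing `c`, the operator `I ⊗ c` with the
associator and the unitor made explicit. -/
def rightContraction (c : N ⊗[R] P →ₗ[R] R) : (M ⊗[R] N) ⊗[R] P →ₗ[R] M :=
  (TensorProduct.rid R M).toLinearMap
    ∘ₗ TensorProduct.map LinearMap.id c
    ∘ₗ (TensorProduct.assoc R M N P).toLinearMap

/-- Contraction of the first two tensor factors with a pairing `c`, the operator `c ⊗ I` with the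
associator and the unitor made explicit. -/
def leftContraction (c : M ⊗[R] N →ₗ[R] R) : M ⊗[R] (N ⊗[R] P) →ₗ[R] P :=
  (TensorProduct.lid R P).toLinearMap
    ∘ₗ TensorProduct.map c LinearMap.id
    ∘ₗ (TensorProduct.assoc R M N P).symm.toLinearMap

@[simp]
theorem rightContraction_tmul (c : N ⊗[R] P →ₗ[R] R) (m : M) (n : N) (p : P) :
    rightContraction c ((m ⊗ₜ[R] n) ⊗ₜ[R] p) = c (n ⊗ₜ[R] p) • m := by
  simp [rightContraction]

@[simp]
theorem leftContraction_tmul (c : M ⊗[R] N →ₗ[R] R) (m : M) (n : N) (p : P) :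
    leftContraction c (m ⊗ₜ[R] (n ⊗ₜ[R] p)) = c (m ⊗ₜ[R] n) • p := by
  simp [leftContraction]

end Contraction

section Sign

theorem sgn_zero : sgn 0 = 1 := by simp [sgn]

theorem sgn_one : sgn 1 = -1 := by simp [sgn]

theorem sgn_add (a b : ZMod 2) : sgn (a + b) = sgn a * sgn b := by
  have eq_zero_or_one : ∀ s : ZMod 2, s = 0 ∨ s = 1 := by decide
  rcases eq_zero_or_one a with rfl | rfl <;> rcases eq_zero_or_one b with rfl | rfl <;>
    simp [sgn_zero, sgn_one, CharTwo.add_self_eq_zero]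

theorem sgn_add_one (a : ZMod 2) : sgn (a + 1) = -sgn a := by
  rw [sgn_add, sgn_one, mul_neg_one]

theorem sgn_mul_self (a : ZMod 2) : sgn a * sgn a = 1 := by
  rw [← sgn_add, CharTwo.add_self_eq_zero, sgn_zero]

end Sign

section Triple

variable (t₁ t₂ : Triple)

@[simp]
theorem Triple.star_lam : t₁.star.lam = -t₁.lam := rfl

@[simp]
theorem Triple.sgn_star : sgn t₁.star.sg = -sgn t₁.sg := sgn_add_one t₁.sg

@[simp]
theorem Triple.add_add_e₂_lam : (t₁ + t₂ + e₂).lam = t₁.lam + t₂.lam :=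
  add_zero (t₁.lam + t₂.lam)

@[simp]
theorem Triple.sgn_add_add_e₂ : sgn (t₁ + t₂ + e₂).sg = sgn t₁.sg * sgn t₂.sg := by
  rw [← sgn_add]
  exact congrArg sgn (add_zero (t₁.sg + t₂.sg))

@[simp]
theorem Triple.sgn_add_sub_e₂_add_e₃ :
    sgn (t₁ + t₂ - e₂ + e₃).sg = -(sgn t₁.sg * sgn t₂.sg) := by
  rw [← sgn_add, ← sgn_add_one]
  exact congrArg (fun s => sgn (s + 1)) (add_zero (t₁.sg + t₂.sg))

end Triple

section BasisValues

variable {M : Type*} [AddCommGroup M] [Module ℚ M] (t t₁ t₂ : Triple)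

@[simp]
theorem bmap_vv (p q : M) : bmap p q vv = p := by simp [bmap, vv]

@[simp]
theorem bmap_ww (p q : M) : bmap p q ww = q := by simp [bmap, ww]

theorem VV_hom_ext {f g : VV →ₗ[ℚ] M}
    (h_vv_vv : f (vv ⊗ₜ vv) = g (vv ⊗ₜ vv)) (h_vv_ww : f (vv ⊗ₜ ww) = g (vv ⊗ₜ ww))
    (h_ww_vv : f (ww ⊗ₜ vv) = g (ww ⊗ₜ vv)) (h_ww_ww : f (ww ⊗ₜ ww) = g (ww ⊗ₜ ww)) :
    f = g := by
  ext <;> assumption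

@[simp]
theorem Ymap_vv : Ymap t₁ t₂ vv = vv ⊗ₜ vv := bmap_vv _ _

theorem Ymap_ww : Ymap t₁ t₂ ww = ww ⊗ₜ vv + sgn t₁.sg • (vv ⊗ₜ ww) := bmap_ww _ _

theorem Y'map_vv :
    Y'map t₁ t₂ vv = (t₁.lam + t₂.lam)⁻¹ •
      (t₁.lam • (vv ⊗ₜ ww) - (sgn t₁.sg * t₂.lam) • (ww ⊗ₜ vv)) := bmap_vv _ _

@[simp]
theorem Y'map_ww : Y'map t₁ t₂ ww = ww ⊗ₜ ww := bmap_ww _ _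

@[simp]
theorem Lmap_vv_vv : Lmap t₁ t₂ (vv ⊗ₜ vv) = vv := by simp [Lmap, vv]

@[simp]
theorem Lmap_vv_ww :
    Lmap t₁ t₂ (vv ⊗ₜ ww) = (sgn t₁.sg * t₂.lam / (t₁.lam + t₂.lam)) • ww := by
  simp [Lmap, vv, ww]

@[simp]
theorem Lmap_ww_vv : Lmap t₁ t₂ (ww ⊗ₜ vv) = (t₁.lam / (t₁.lam + t₂.lam)) • ww := by
  simp [Lmap, vv, ww]

@[simp]
theorem Lmap_ww_ww : Lmap t₁ t₂ (ww ⊗ₜ ww) = 0 := by simp [Lmap, ww]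

@[simp]
theorem L'map_vv_vv : L'map t₁ t₂ (vv ⊗ₜ vv) = 0 := by simp [L'map, vv]

@[simp]
theorem L'map_vv_ww : L'map t₁ t₂ (vv ⊗ₜ ww) = vv := by simp [L'map, vv, ww]

@[simp]
theorem L'map_ww_vv : L'map t₁ t₂ (ww ⊗ₜ vv) = -sgn t₁.sg • vv := by simp [L'map, vv, ww]

@[simp]
theorem L'map_ww_ww : L'map t₁ t₂ (ww ⊗ₜ ww) = ww := by simp [L'map, ww]

@[simp]
theorem capMap_vv_vv : capMap t (vv ⊗ₜ vv) = 0 := by simp [capMap, vv]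

@[simp]
theorem capMap_vv_ww : capMap t (vv ⊗ₜ ww) = 1 := by simp [capMap, vv, ww]

@[simp]
theorem capMap_ww_vv : capMap t (ww ⊗ₜ vv) = sgn t.sg := by simp [capMap, vv, ww]

@[simp]
theorem capMap_ww_ww : capMap t (ww ⊗ₜ ww) = 0 := by simp [capMap, ww]

end BasisValues

section Bending

variable {t₁ t₂ : Triple} (c : VV →ₗ[ℚ] ℚ) (x : V)

@[simp]
theorem rightContraction_Ymap_ww :
    rightContraction c (Ymap t₁ t₂ ww ⊗ₜ x)
      = c (vv ⊗ₜ x) • ww + (sgn t₁.sg * c (ww ⊗ₜ x)) • vv := by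
  simp [Ymap_ww, add_tmul, ← smul_tmul', smul_smul]

@[simp]
theorem leftContraction_Ymap_ww :
    leftContraction c (x ⊗ₜ Ymap t₁ t₂ ww)
      = c (x ⊗ₜ ww) • vv + (sgn t₁.sg * c (x ⊗ₜ vv)) • ww := by
  simp [Ymap_ww, tmul_add, smul_smul]

@[simp]
theorem rightContraction_Y'map_vv :
    rightContraction c (Y'map t₁ t₂ vv ⊗ₜ x)
      = (t₁.lam + t₂.lam)⁻¹ •
        ((t₁.lam * c (ww ⊗ₜ x)) • vv - (sgn t₁.sg * t₂.lam * c (vv ⊗ₜ x)) • ww) := by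
  simp [Y'map_vv, sub_tmul, ← smul_tmul', smul_smul]

@[simp]
theorem leftContraction_Y'map_vv :
    leftContraction c (x ⊗ₜ Y'map t₁ t₂ vv)
      = (t₁.lam + t₂.lam)⁻¹ •
        ((t₁.lam * c (x ⊗ₜ vv)) • ww - (sgn t₁.sg * t₂.lam * c (x ⊗ₜ ww)) • vv) := by
  simp [Y'map_vv, tmul_sub, smul_smul]

theorem L'map_eq_rightContraction_Ymap (t₁ t₂ : Triple) :
    L'map t₁ t₂ = rightContraction (capMap t₂)
      ∘ₗ TensorProduct.map (Ymap (t₁ + t₂ - e₂ + e₃) t₂.star) LinearMap.id := by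
  apply VV_hom_ext <;> simp [mul_assoc, sgn_mul_self]

theorem L'map_eq_leftContraction_Ymap (t₁ t₂ : Triple) :
    L'map t₁ t₂ = leftContraction (capMap t₁.star)
      ∘ₗ TensorProduct.map LinearMap.id (Ymap t₁.star (t₁ + t₂ - e₂ + e₃)) := by
  apply VV_hom_ext <;> simp [sgn_mul_self]

theorem Lmap_eq_smul_rightContraction_Y'map (h₁ : t₁.lam ≠ 0) (h₁₂ : t₁.lam + t₂.lam ≠ 0) :
    Lmap t₁ t₂ = (sgn t₂.sg * (t₁.lam / (t₁ + t₂ + e₂).lam)) •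
      (rightContraction (capMap t₂)
        ∘ₗ TensorProduct.map (Y'map (t₁ + t₂ + e₂) t₂.star) LinearMap.id) := by
  have bend_vv (y : V) :
      rightContraction (capMap t₂) (Y'map (t₁ + t₂ + e₂) t₂.star vv ⊗ₜ y)
        = t₁.lam⁻¹ • (((t₁.lam + t₂.lam) * capMap t₂ (ww ⊗ₜ y)) • vv
          + (sgn t₁.sg * sgn t₂.sg * t₂.lam * capMap t₂ (vv ⊗ₜ y)) • ww) := by
    simp
  have sgn_sq : sgn t₂.sg ^ 2 = 1 := by rw [sq, sgn_mul_self]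
  apply VV_hom_ext <;>
    simp only [LinearMap.smul_apply, LinearMap.comp_apply, map_tmul, LinearMap.id_apply,
      Lmap_vv_vv, Lmap_vv_ww, Lmap_ww_vv, Lmap_ww_ww, bend_vv, Y'map_ww, rightContraction_tmul,
      capMap_vv_vv, capMap_vv_ww, capMap_ww_vv, capMap_ww_ww, Triple.add_add_e₂_lam] <;>
    match_scalars <;> field_simp <;> simp [sgn_sq]

theorem Lmap_eq_smul_leftContraction_Y'map (h₂ : t₂.lam ≠ 0) (h₁₂ : t₁.lam + t₂.lam ≠ 0) :
    Lmap t₁ t₂ = (sgn t₁.sg * (t₂.lam / (t₁ + t₂ + e₂).lam)) •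
      (leftContraction (capMap t₁.star)
        ∘ₗ TensorProduct.map LinearMap.id (Y'map t₁.star (t₁ + t₂ + e₂))) := by
  have bend_vv (x : V) :
      leftContraction (capMap t₁.star) (x ⊗ₜ Y'map t₁.star (t₁ + t₂ + e₂) vv)
        = t₂.lam⁻¹ • ((sgn t₁.sg * (t₁.lam + t₂.lam) * capMap t₁.star (x ⊗ₜ ww)) • vv
          - (t₁.lam * capMap t₁.star (x ⊗ₜ vv)) • ww) := by
    simp [neg_add_eq_sub]
  have sgn_sq : sgn t₁.sg ^ 2 = 1 := by rw [sq, sgn_mul_self]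
  apply VV_hom_ext <;>
    simp only [LinearMap.smul_apply, LinearMap.comp_apply, map_tmul, LinearMap.id_apply,
      Lmap_vv_vv, Lmap_vv_ww, Lmap_ww_vv, Lmap_ww_ww, bend_vv, Y'map_ww, leftContraction_tmul,
      capMap_vv_vv, capMap_vv_ww, capMap_ww_vv, capMap_ww_ww, Triple.add_add_e₂_lam,
      Triple.sgn_star] <;>
    match_scalars <;> field_simp <;> simp [sgn_sq]

end Bending

/-- Lemma 16: the projections L' and L expressed through Y, Y' and ∩. -/
theorem stmt10 (t₁ t₂ : Triple) (h₁ : t₁.lam ≠ 0) (h₂ : t₂.lam ≠ 0)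
    (h₁₂ : t₁.lam + t₂.lam ≠ 0) :
    L'map t₁ t₂ =
      (TensorProduct.rid ℚ V).toLinearMap
        ∘ₗ TensorProduct.map LinearMap.id (capMap t₂)
        ∘ₗ (TensorProduct.assoc ℚ V V V).toLinearMap
        ∘ₗ TensorProduct.map (Ymap (t₁ + t₂ - e₂ + e₃) t₂.star) LinearMap.id ∧
    L'map t₁ t₂ =
      (TensorProduct.lid ℚ V).toLinearMap
        ∘ₗ TensorProduct.map (capMap t₁.star) LinearMap.id
        ∘ₗ (TensorProduct.assoc ℚ V V V).symm.toLinearMap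
        ∘ₗ TensorProduct.map LinearMap.id (Ymap t₁.star (t₁ + t₂ - e₂ + e₃)) ∧
    Lmap t₁ t₂ =
      (sgn t₂.sg * (t₁.lam / ((t₁ + t₂ + e₂).lam))) •
       ((TensorProduct.rid ℚ V).toLinearMap
        ∘ₗ TensorProduct.map LinearMap.id (capMap t₂)
        ∘ₗ (TensorProduct.assoc ℚ V V V).toLinearMap
        ∘ₗ TensorProduct.map (Y'map (t₁ + t₂ + e₂) t₂.star) LinearMap.id) ∧
    Lmap t₁ t₂ =
      (sgn t₁.sg * (t₂.lam / ((t₁ + t₂ + e₂).lam))) •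
       ((TensorProduct.lid ℚ V).toLinearMap
        ∘ₗ TensorProduct.map (capMap t₁.star) LinearMap.id
        ∘ₗ (TensorProduct.assoc ℚ V V V).symm.toLinearMap
        ∘ₗ TensorProduct.map LinearMap.id (Y'map t₁.star (t₁ + t₂ + e₂))) := by
  exact ⟨L'map_eq_rightContraction_Ymap t₁ t₂, L'map_eq_leftContraction_Ymap t₁ t₂,
    Lmap_eq_smul_rightContraction_Y'map h₁ h₁₂, Lmap_eq_smul_leftContraction_Y'map h₂ h₁₂⟩
end
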